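/- arXiv:2401.01971 — 3 statements merged into one kernel-verified Lean document; each statement's English description precedes it below -/
import Mathlib

section
/- Let μ be a positive Borel measure on ℝ with all moments finite, let 1 ≤ m ≤ n be integers, and assume H_k[μ] ≠ 0 for every k with n−m ≤ k ≤ n−1. For z_1,…,z_m ∈ ℂ let H_n^B[μ; z_1,…,z_m] denote the determinant of the n×n matrix whose (j,k) entry (indices starting at 1) equals μ_{j+k−2} for 1 ≤ k ≤ n−m and equals z_{k−(n−m)}^{j−1} for n−m+1 ≤ k ≤ n. Then H_n^B[μ; z_1,…,z_m] = H_{n−m}[μ] · det( P_{n−m+i−1}(z_k) )_{i,k=1}^{m}. -/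
open MeasureTheory Matrix

/-- The `k`-th moment of a measure `μ` on `ℝ`. -/
noncomputable def mom (μ : Measure ℝ) (k : ℕ) : ℝ := ∫ x, x ^ k ∂μ

/-- The `n × n` Hankel determinant `H_n[μ] = det (μ_{j+k})_{j,k=0}^{n-1}` (with `H_0[μ] = 1`). -/
noncomputable def hankelDet (μ : Measure ℝ) (n : ℕ) : ℝ :=
  Matrix.det (Matrix.of fun j k : Fin n => mom μ (j + k))

/-- The `k`-th monic orthogonal polynomial associated with `μ`, evaluated at `z ∈ ℂ`:
`P_k(z) = H_k[μ]⁻¹ · det` of the `(k+1) × (k+1)` matrix whose `i`-th row (`0 ≤ i ≤ k-1`) is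
`(μ_i, μ_{i+1}, …, μ_{i+k})` and whose last row is `(1, z, …, z^k)`. -/
noncomputable def monicOP (μ : Measure ℝ) (k : ℕ) (z : ℂ) : ℂ :=
  ((hankelDet μ k : ℝ) : ℂ)⁻¹ *
    Matrix.det (Matrix.of fun i j : Fin (k + 1) =>
      if (i : ℕ) < k then ((mom μ ((i : ℕ) + (j : ℕ)) : ℝ) : ℂ) else z ^ (j : ℕ))

/-!
For a fixed array `a`, the determinant of the `(k + 1) × (k + 1)` truncation of the rows
`a 0, …, a (k - 1), x` is a linear functional `x ↦ ∑ j ≤ k, c k j * x j`. It kills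
`a 0, …, a (k - 1)`, and its top coefficient `c k k` is the leading minor of order `k`. Multiplying
the bordered matrix on the right by the block upper triangular matrix built from the coefficients
`c (p + i)` clears the top right block and leaves the values of these functionals at the border
rows in the bottom right block.
-/

section BorderedMinor

variable {R : Type*} [CommRing R] (a : ℕ → ℕ → R)

/-- The leading principal minor of order `k` of an infinite array; for `a i j = μ_{i+j}` it is the
Hankel determinant `H_k[μ]`. -/
def leadingMinor (k : ℕ) : R :=
  det (of fun i j : Fin k => a i j)

/-- The determinant of the rows `a 0, …, a (p - 1), v 0, …, v (m - 1)`, all truncated to their first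
`p + m` entries. For `a i j = μ_{i+j}` and `v k j = z_k ^ j` the matrix is the transpose of the one
defining `H_{p+m}^B[μ; z]`, and with a single border row the determinant is `H_p[μ] * P_p(z)`. -/
def borderedMinor (p : ℕ) {m : ℕ} (v : Fin m → ℕ → R) : R :=
  det (of fun i j : Fin (p + m) => Fin.append (fun l : Fin p => a l) v i j)

/-- The coefficient of `x j` in the linear functional `x ↦ borderedMinor a k ![x]`, obtained by
evaluating it at the `j`-th unit sequence. -/
def borderCoeff (k j : ℕ) : R :=
  borderedMinor a k ![Pi.single j 1]

lemma borderedMinor_eq_det_fromBlocks (p : ℕ) {m : ℕ} (v : Fin m → ℕ → R) :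
    borderedMinor a p v =
      det (fromBlocks (of fun i j : Fin p => a i j) (of fun (i : Fin p) (j : Fin m) => a i (p + j))
        (of fun (i : Fin m) (j : Fin p) => v i j) (of fun i j : Fin m => v i (p + j))) := by
  rw [borderedMinor, ← det_submatrix_equiv_self finSumFinEquiv]
  congr 1
  ext (i | i) (j | j) <;> simp

lemma borderedMinor_singleton_eq_sum_fin_succ (k : ℕ) (x : ℕ → R) :
    borderedMinor a k ![x] = ∑ j : Fin (k + 1), x j * borderCoeff a k j := by
  have last_eq : Fin.last k = Fin.natAdd k (0 : Fin 1) := rfl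
  rw [borderedMinor, det_eq_sum_mul_adjugate_row _ (Fin.last k)]
  refine Finset.sum_congr rfl fun j _ => ?_
  rw [adjugate_apply, borderCoeff, borderedMinor]
  congr 2
  · simp [last_eq]
  · ext i l
    refine Fin.addCases (fun i => ?_) (fun i => ?_) i
    · simp [last_eq, updateRow_apply, Fin.ext_iff, i.isLt.ne]
    · simp [last_eq, Subsingleton.elim i 0, Pi.single_apply, Fin.ext_iff]

lemma borderCoeff_self (k : ℕ) : borderCoeff a k k = leadingMinor a k := by
  have bottom_left : (of fun (i : Fin 1) (j : Fin k) =>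
      (![Pi.single k 1] : Fin 1 → ℕ → R) i j) = 0 := by
    ext i j
    simp [Pi.single_apply, j.isLt.ne]
  rw [borderCoeff, borderedMinor_eq_det_fromBlocks, bottom_left, det_fromBlocks_zero₂₁]
  simp [leadingMinor]

lemma borderCoeff_eq_zero_of_lt {k j : ℕ} (hkj : k < j) : borderCoeff a k j = 0 := by
  refine det_eq_zero_of_row_eq_zero (Fin.natAdd k (0 : Fin 1)) fun l => ?_
  have hlj : (l : ℕ) ≠ j := by omega
  simp [hlj]

lemma borderedMinor_singleton_eq_sum {k N : ℕ} (hkN : k < N) (x : ℕ → R) :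
    borderedMinor a k ![x] = ∑ j : Fin N, x j * borderCoeff a k j := by
  rw [borderedMinor_singleton_eq_sum_fin_succ,
    Fin.sum_univ_eq_sum_range (fun j => x j * borderCoeff a k j),
    Fin.sum_univ_eq_sum_range (fun j => x j * borderCoeff a k j)]
  refine Finset.sum_subset (Finset.range_mono hkN) fun j _ hj => ?_
  rw [borderCoeff_eq_zero_of_lt a (by simpa using hj), mul_zero]

lemma borderedMinor_singleton_row {k : ℕ} (i : Fin k) : borderedMinor a k ![a i] = 0 := by
  refine det_zero_of_row_eq (i := Fin.castAdd 1 i) (j := Fin.natAdd k 0) ?_ ?_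
  · simp [Fin.ext_iff, i.isLt.ne]
  · ext j
    simp

lemma det_borderCoeff (p m : ℕ) :
    det (of fun j i : Fin m => borderCoeff a (p + i) (p + j)) =
      ∏ i : Fin m, leadingMinor a (p + i) := by
  rw [det_of_isUpperTriangular]
  · simp [borderCoeff_self]
  · intro j i hij
    exact borderCoeff_eq_zero_of_lt a (Nat.add_lt_add_left hij p)

theorem prod_leadingMinor_mul_borderedMinor (p : ℕ) {m : ℕ} (v : Fin m → ℕ → R) :
    (∏ i : Fin m, leadingMinor a (p + i)) * borderedMinor a p v =
      leadingMinor a p * det (of fun i k : Fin m => borderedMinor a (p + i) ![v k]) := by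
  let A : Matrix (Fin p) (Fin p) R := of fun i j => a i j
  let B : Matrix (Fin p) (Fin m) R := of fun i j => a i (p + j)
  let V : Matrix (Fin m) (Fin p) R := of fun k j => v k j
  let W : Matrix (Fin m) (Fin m) R := of fun k j => v k (p + j)
  let C : Matrix (Fin p) (Fin m) R := of fun j i => borderCoeff a (p + i) j
  let T : Matrix (Fin m) (Fin m) R := of fun j i => borderCoeff a (p + i) (p + j)
  let P : Matrix (Fin m) (Fin m) R := of fun i k => borderedMinor a (p + i) ![v k]
  have functional_eq (i : Fin m) (x : ℕ → R) :
      ∑ j : Fin p, x j * borderCoeff a (p + i) j +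
        ∑ j : Fin m, x (p + j) * borderCoeff a (p + i) (p + j) =
          borderedMinor a (p + i) ![x] := by
    rw [borderedMinor_singleton_eq_sum a (Nat.add_lt_add_left i.isLt p), Fin.sum_univ_add]
    simp
  have top_right : A * C + B * T = 0 := by
    ext l i
    exact (functional_eq i (a l)).trans (borderedMinor_singleton_row a (l.castAdd i))
  have bottom_right : V * C + W * T = Pᵀ := by
    ext k i
    exact functional_eq i (v k)
  calc (∏ i : Fin m, leadingMinor a (p + i)) * borderedMinor a p v
      = det (fromBlocks A B V W) * det (fromBlocks 1 C 0 T) := by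
        rw [det_fromBlocks_zero₂₁, det_one, one_mul, det_borderCoeff,
          borderedMinor_eq_det_fromBlocks, mul_comm]
    _ = det (fromBlocks A 0 V Pᵀ) := by
        rw [← det_mul, fromBlocks_multiply, top_right, bottom_right]
        simp only [Matrix.mul_one, Matrix.mul_zero, add_zero]
    _ = leadingMinor a p * det P := by
        rw [det_fromBlocks_zero₁₂, det_transpose, leadingMinor]

end BorderedMinor

theorem bordered_hankel_eq_orthopoly_det_general {K : Type*} [Field K] (a : ℕ → ℕ → K) (p : ℕ)
    {m : ℕ} (ha : ∀ i : Fin m, leadingMinor a (p + i) ≠ 0) (v : Fin m → ℕ → K) :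
    borderedMinor a p v = leadingMinor a p *
      det (of fun i k : Fin m =>
        (leadingMinor a (p + i))⁻¹ * borderedMinor a (p + i) ![v k]) := by
  have prod_ne_zero : ∏ i : Fin m, leadingMinor a (p + i) ≠ 0 :=
    Finset.prod_ne_zero_iff.mpr fun i _ => ha i
  apply mul_left_cancel₀ prod_ne_zero
  have det_normalized := det_mul_column (fun i : Fin m => (leadingMinor a (p + i))⁻¹)
    (of fun i k : Fin m => borderedMinor a (p + i) ![v k])
  simp only [of_apply, Finset.prod_inv_distrib] at det_normalized
  rw [prod_leadingMinor_mul_borderedMinor, det_normalized, mul_left_comm,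
    mul_inv_cancel_left₀ prod_ne_zero]

section Moments

variable (μ : Measure ℝ)

/-- The infinite Hankel matrix `(μ_{i+j})` of moments, with complex entries. -/
noncomputable def hankelArray (i j : ℕ) : ℂ :=
  (mom μ (i + j) : ℂ)

lemma leadingMinor_hankelArray (k : ℕ) : leadingMinor (hankelArray μ) k = (hankelDet μ k : ℂ) :=
  (Complex.ofRealHom.map_det _).symm

lemma monicOP_eq_inv_mul_borderedMinor (k : ℕ) (z : ℂ) :
    monicOP μ k z = (leadingMinor (hankelArray μ) k)⁻¹ *
      borderedMinor (hankelArray μ) k ![fun j => z ^ j] := by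
  rw [monicOP, leadingMinor_hankelArray, borderedMinor]
  congr 2
  ext i j
  refine Fin.addCases (fun i => ?_) (fun i => ?_) i <;> simp [hankelArray]

lemma det_borderedHankel_eq_borderedMinor {n m : ℕ} (hmn : m ≤ n) (z : Fin m → ℂ) :
    det (of fun j k : Fin n =>
      if hk : (k : ℕ) < n - m then (mom μ (j + k) : ℂ)
      else z ⟨k - (n - m), by omega⟩ ^ (j : ℕ)) =
    borderedMinor (hankelArray μ) (n - m) fun k j => z k ^ j := by
  obtain ⟨p, rfl⟩ := Nat.exists_eq_add_of_le' hmn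
  simp only [Nat.add_sub_cancel]
  rw [borderedMinor, ← det_transpose]
  congr 1
  ext k j
  refine Fin.addCases (fun k => ?_) (fun k => ?_) k <;> simp [hankelArray, add_comm]

end Moments

/-- Proposition 1.1: the multi-bordered Hankel determinant equals
`H_{n-m}[μ]` times the determinant of the matrix of orthogonal polynomials evaluated at the
border points. -/
theorem bordered_hankel_eq_orthopoly_det
    (μ : Measure ℝ) (hmom : ∀ k : ℕ, Integrable (fun x : ℝ => x ^ k) μ)
    (n m : ℕ) (hm : 1 ≤ m) (hmn : m ≤ n)
    (hH : ∀ k : ℕ, n - m ≤ k → k ≤ n - 1 → hankelDet μ k ≠ 0)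
    (z : Fin m → ℂ) :
    Matrix.det (Matrix.of fun j k : Fin n =>
      if hk : (k : ℕ) < n - m then ((mom μ ((j : ℕ) + (k : ℕ)) : ℝ) : ℂ)
      else z ⟨(k : ℕ) - (n - m), by have := k.isLt; omega⟩ ^ (j : ℕ)) =
    ((hankelDet μ (n - m) : ℝ) : ℂ) *
      Matrix.det (Matrix.of fun i k : Fin m => monicOP μ (n - m + (i : ℕ)) (z k)) := by
  rw [det_borderedHankel_eq_borderedMinor μ hmn,
    bordered_hankel_eq_orthopoly_det_general _ _ fun i => ?_]
  · simp only [leadingMinor_hankelArray, monicOP_eq_inv_mul_borderedMinor]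
  · rw [leadingMinor_hankelArray]
    exact_mod_cast hH _ (by omega) (by omega)
end

section
/- Let μ be a positive Borel measure on ℝ with all moments finite, let 1 ≤ m ≤ n, and assume H_k[μ] ≠ 0 for every k with n−m ≤ k ≤ n−1. Let ν^{(1)},…,ν^{(m)} be finite complex Borel measures on ℝ all of whose absolute moments are finite, with moments ν^{(i)}_k = ∫_ℝ x^k dν^{(i)}(x). Let H_n^B[μ; ν^{(1)},…,ν^{(m)}] denote the determinant of the n×n matrix whose (j,k) entry equals μ_{j+k−2} for 1 ≤ k ≤ n−m and equals ν^{(k−(n−m))}_{j−1} for n−m+1 ≤ k ≤ n. Then H_n^B[μ; ν^{(1)},…,ν^{(m)}] = H_{n−m}[μ] · ∫_ℝ ⋯ ∫_ℝ det( P_{n−m+i−1}(z_k) )_{i,k=1}^{m} dν^{(1)}(z_1) ⋯ dν^{(m)}(z_m). -/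
open MeasureTheory Matrix

/-- The `k`-th (complex) moment of the finite complex Borel measure `dν = g dτ` on `ℝ`. -/
noncomputable def cmom (τ : Measure ℝ) (g : ℝ → ℂ) (k : ℕ) : ℂ :=
  ∫ x, ((x : ℂ) ^ k) * g x ∂τ

/-!
A determinant of linear functionals evaluated on `1, X, …, X ^ (n - 1)` does not change when these
powers are replaced by any monic polynomials of degrees `0, …, n - 1`, because the change of basis
is unitriangular. The bordered Hankel determinant is of this kind: its first `N = n - m` columns are
the functionals `p ↦ L (X ^ k * p)`, where `L` has moments `μ_j`, and its last `m` columns are the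
border functionals `p ↦ ∫ p dν⁽ᵏ⁾`. Replace `X ^ (N + i)` by `P_{N+i}` and keep the lower powers:
orthogonality makes the lower left block vanish, so the determinant splits into `H_N[μ]` times
`det (∫ P_{N+i} dν⁽ᵏ⁾)`. In the latter each column involves a single variable, so the integrals can
be pulled out of the determinant.
-/

open Polynomial

section Algebra

variable {R : Type*}

/-- The `n × n` Hankel matrix `(s_{i+j})` of a sequence `s`, indexed from `0`. -/
def hankelMatrix (s : ℕ → R) (n : ℕ) : Matrix (Fin n) (Fin n) R :=
  of fun i j => s (i + j)

/-- The first `N` columns of the Hankel matrix of `s` of size `N + m`, followed by the columns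
`(b_k(j))_j` given by the `m` border sequences `b`. -/
def borderedHankelMatrix {m : ℕ} (s : ℕ → R) (N : ℕ) (b : Fin m → ℕ → R) :
    Matrix (Fin (N + m)) (Fin (N + m)) R :=
  of fun j => Fin.append (fun k : Fin N => s (j + k)) fun k => b k j

lemma borderedHankelMatrix_eq_of_dite {m : ℕ} (s : ℕ → R) (N : ℕ) (b : Fin m → ℕ → R) :
    borderedHankelMatrix s N b = of fun j k : Fin (N + m) =>
      if hk : (k : ℕ) < N then s (j + k) else b ⟨k - N, by omega⟩ j := by
  ext j k
  refine Fin.addCases (fun k => ?_) (fun k => ?_) k <;> simp [borderedHankelMatrix]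

variable [CommRing R]

lemma det_updateRow_eq_sum_mul_adjugate {ι : Type*} [Fintype ι] [DecidableEq ι]
    (M : Matrix ι ι R) (i : ι) (v : ι → R) :
    (M.updateRow i v).det = ∑ j, v j * M.adjugate j i := by
  rw [← cramer_transpose_apply, cramer_eq_adjugate_mulVec, ← adjugate_transpose]
  simp only [mulVec, dotProduct, transpose_apply, mul_comm]

lemma linearMap_det_updateRow {A ι : Type*} [CommRing A] [Algebra R A] [Fintype ι] [DecidableEq ι]
    (ψ : A →ₗ[R] R) (M : Matrix ι ι R) (i : ι) (v : ι → A) :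
    ψ ((M.map (algebraMap R A)).updateRow i v).det = (M.updateRow i (ψ ∘ v)).det := by
  have adjugate_map : (M.map (algebraMap R A)).adjugate = M.adjugate.map (algebraMap R A) :=
    ((algebraMap R A).map_adjugate M).symm
  simp only [det_updateRow_eq_sum_mul_adjugate, adjugate_map, map_sum, Matrix.map_apply,
    Function.comp_apply]
  refine Finset.sum_congr rfl fun j _ => ?_
  rw [mul_comm, ← Algebra.smul_def, map_smul, smul_eq_mul, mul_comm]

lemma det_linearMap_monic_eq_det_linearMap_X_pow {n : ℕ} (φ : Fin n → R[X] →ₗ[R] R)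
    (p : Fin n → R[X]) (hdeg : ∀ j, (p j).natDegree = j) (hmonic : ∀ j, (p j).Monic) :
    (of fun j k => φ k (p j)).det = (of fun j k : Fin n => φ k (X ^ (j : ℕ))).det := by
  have change_of_basis : (of fun j k => φ k (p j)) =
      (of fun l j : Fin n => (p j).coeff l)ᵀ * of fun j k : Fin n => φ k (X ^ (j : ℕ)) := by
    ext j k
    have hlt : (p j).natDegree < n := by simp [hdeg]
    conv_lhs => rw [of_apply, (p j).as_sum_range_C_mul_X_pow' hlt]
    simp only [Finset.sum_range, map_sum, ← smul_eq_C_mul, map_smul, smul_eq_mul, mul_apply,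
      transpose_apply, of_apply]
  rw [change_of_basis, det_mul, det_transpose, det_matrixOfPolynomials p hdeg hmonic, one_mul]

/-- The linear functional on polynomials with prescribed moments: `X ^ k` is sent to `s k`. -/
noncomputable def momentFunctional (s : ℕ → R) : R[X] →ₗ[R] R :=
  lsum fun k => LinearMap.toSpanSingleton R R (s k)

@[simp]
lemma momentFunctional_X_pow (s : ℕ → R) (k : ℕ) : momentFunctional s (X ^ k) = s k := by
  simp [momentFunctional, lsum, X_pow_eq_monomial, sum_monomial_index]

lemma momentFunctional_apply (s : ℕ → R) (p : R[X]) :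
    momentFunctional s p = ∑ k ∈ p.support, p.coeff k * s k := rfl

lemma borderedHankelMatrix_eq_linearMap_X_pow {m : ℕ} (s : ℕ → R) (N : ℕ) (b : Fin m → ℕ → R) :
    borderedHankelMatrix s N b = of fun j k : Fin (N + m) =>
      (Fin.append (fun k : Fin N => momentFunctional s ∘ₗ LinearMap.mulLeft R (X ^ (k : ℕ)))
        fun k => momentFunctional (b k)) k (X ^ (j : ℕ)) := by
  ext j k
  refine Fin.addCases (fun k => ?_) (fun k => ?_) k
  · simp [borderedHankelMatrix, ← pow_add, add_comm]
  · simp [borderedHankelMatrix]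

theorem det_borderedHankelMatrix_eq_mul_det {m : ℕ} (s : ℕ → R) (N : ℕ) (b : Fin m → ℕ → R)
    (P : Fin m → R[X]) (hdeg : ∀ i, (P i).natDegree = N + i) (hmonic : ∀ i, (P i).Monic)
    (horth : ∀ i, ∀ k < N, momentFunctional s (X ^ k * P i) = 0) :
    (borderedHankelMatrix s N b).det =
      (hankelMatrix s N).det * (of fun i k => momentFunctional (b k) (P i)).det := by
  nontriviality R
  let p : Fin (N + m) → R[X] := Fin.append (fun j : Fin N => X ^ (j : ℕ)) P
  have p_natDegree (j) : (p j).natDegree = j := by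
    refine Fin.addCases (fun j => ?_) (fun j => ?_) j <;> simp [p, hdeg]
  have p_monic (j) : (p j).Monic := by
    refine Fin.addCases (fun j => ?_) (fun j => ?_) j <;> simp [p, hmonic, monic_X_pow]
  rw [borderedHankelMatrix_eq_linearMap_X_pow,
    ← det_linearMap_monic_eq_det_linearMap_X_pow _ p p_natDegree p_monic,
    ← det_fromBlocks_zero₂₁ _ (of fun (j : Fin N) k => b k j),
    ← det_submatrix_equiv_self finSumFinEquiv]
  congr 1
  ext (j | j) (k | k)
  · simp [p, hankelMatrix, ← pow_add, add_comm]
  · simp [p]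
  · simp [p, horth]
  · simp [p]

end Algebra

section OrthogonalPolynomials

variable {K : Type*} [Field K]

/-- The `k`-th monic orthogonal polynomial of the sequence of moments `s`, given by the determinant
formula: the last row of the Hankel matrix of size `k + 1` is replaced by `1, X, …, X ^ k`. It is
`0` when the Hankel determinant of size `k` vanishes. -/
noncomputable def monicOrthogonalPolynomial (s : ℕ → K) (k : ℕ) : K[X] :=
  (hankelMatrix s k).det⁻¹ •
    (((hankelMatrix s (k + 1)).map (algebraMap K K[X])).updateRow (Fin.last k)
      fun j => X ^ (j : ℕ)).det

lemma linearMap_monicOrthogonalPolynomial (ψ : K[X] →ₗ[K] K) (s : ℕ → K) (k : ℕ) :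
    ψ (monicOrthogonalPolynomial s k) = (hankelMatrix s k).det⁻¹ *
      ((hankelMatrix s (k + 1)).updateRow (Fin.last k) fun j => ψ (X ^ (j : ℕ))).det := by
  rw [monicOrthogonalPolynomial, map_smul, linearMap_det_updateRow, smul_eq_mul]
  rfl

lemma momentFunctional_X_pow_mul_monicOrthogonalPolynomial (s : ℕ → K) {k l : ℕ} (hl : l < k) :
    momentFunctional s (X ^ l * monicOrthogonalPolynomial s k) = 0 := by
  let row : Fin (k + 1) := ⟨l, by omega⟩
  have row_ne_last : row ≠ Fin.last k := Fin.ne_of_val_ne hl.ne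
  have row_eq : (fun j : Fin (k + 1) => momentFunctional s (X ^ l * X ^ (j : ℕ))) =
      hankelMatrix s (k + 1) row := by
    ext j
    simp [row, hankelMatrix, ← pow_add]
  have := linearMap_monicOrthogonalPolynomial
    (momentFunctional s ∘ₗ LinearMap.mulLeft K (X ^ l)) s k
  simpa [row_eq, det_updateRow_eq_zero row_ne_last] using this

lemma coeff_monicOrthogonalPolynomial_of_lt (s : ℕ → K) {k l : ℕ} (hl : k < l) :
    (monicOrthogonalPolynomial s k).coeff l = 0 := by
  have row_eq_zero : (fun j : Fin (k + 1) => lcoeff K l (X ^ (j : ℕ))) = 0 := by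
    ext j
    have : l ≠ j := by omega
    simp [coeff_X_pow, this]
  rw [← lcoeff_apply, linearMap_monicOrthogonalPolynomial, row_eq_zero,
    det_eq_zero_of_row_eq_zero (Fin.last k) (by simp), mul_zero]

lemma natDegree_monicOrthogonalPolynomial_le (s : ℕ → K) (k : ℕ) :
    (monicOrthogonalPolynomial s k).natDegree ≤ k :=
  natDegree_le_iff_coeff_eq_zero.2 fun _ => coeff_monicOrthogonalPolynomial_of_lt s

lemma coeff_monicOrthogonalPolynomial_self {s : ℕ → K} {k : ℕ} (hk : (hankelMatrix s k).det ≠ 0) :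
    (monicOrthogonalPolynomial s k).coeff k = 1 := by
  have row_eq_single : (fun j : Fin (k + 1) => lcoeff K k (X ^ (j : ℕ))) =
      Pi.single (Fin.last k) 1 := by
    ext j
    simp [coeff_X_pow, Pi.single_apply, Fin.ext_iff, eq_comm]
  have minor_eq : (hankelMatrix s (k + 1)).submatrix (Fin.last k).succAbove
      (Fin.last k).succAbove = hankelMatrix s k := by
    ext i j
    simp [hankelMatrix]
  rw [← lcoeff_apply, linearMap_monicOrthogonalPolynomial, row_eq_single, ← adjugate_apply,
    adjugate_fin_succ_eq_det_submatrix, minor_eq, ← two_mul, pow_mul, neg_one_sq, one_pow, one_mul,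
    inv_mul_cancel₀ hk]

lemma monic_monicOrthogonalPolynomial {s : ℕ → K} {k : ℕ} (hk : (hankelMatrix s k).det ≠ 0) :
    (monicOrthogonalPolynomial s k).Monic :=
  monic_of_natDegree_le_of_coeff_eq_one k (natDegree_monicOrthogonalPolynomial_le s k)
    (coeff_monicOrthogonalPolynomial_self hk)

lemma natDegree_monicOrthogonalPolynomial {s : ℕ → K} {k : ℕ} (hk : (hankelMatrix s k).det ≠ 0) :
    (monicOrthogonalPolynomial s k).natDegree = k :=
  natDegree_eq_of_le_of_coeff_ne_zero (natDegree_monicOrthogonalPolynomial_le s k)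
    (coeff_monicOrthogonalPolynomial_self hk ▸ one_ne_zero)

theorem det_borderedHankelMatrix_eq_mul_det_monicOrthogonalPolynomial {m : ℕ} (s : ℕ → K) (N : ℕ)
    (hs : ∀ k, N ≤ k → k < N + m → (hankelMatrix s k).det ≠ 0) (b : Fin m → ℕ → K) :
    (borderedHankelMatrix s N b).det = (hankelMatrix s N).det *
      (of fun i k : Fin m => momentFunctional (b k) (monicOrthogonalPolynomial s (N + i))).det := by
  have hankel_ne (i : Fin m) : (hankelMatrix s (N + i)).det ≠ 0 := hs _ (by omega) (by omega)
  exact det_borderedHankelMatrix_eq_mul_det s N b _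
    (fun i => natDegree_monicOrthogonalPolynomial (hankel_ne i))
    (fun i => monic_monicOrthogonalPolynomial (hankel_ne i))
    fun i k hk => momentFunctional_X_pow_mul_monicOrthogonalPolynomial s (by omega)

end OrthogonalPolynomials

section Integration

variable {𝕜 : Type*} [RCLike 𝕜]

lemma integral_pi_det {ι : Type*} [Fintype ι] [DecidableEq ι] {Ω : ι → Type*}
    [∀ k, MeasurableSpace (Ω k)] (τ : ∀ k, Measure (Ω k)) [∀ k, SigmaFinite (τ k)]
    (f : ι → ∀ k, Ω k → 𝕜) (hf : ∀ i k, Integrable (f i k) (τ k)) :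
    ∫ ω, (of fun i k => f i k (ω k)).det ∂Measure.pi τ = (of fun i k => ∫ x, f i k x ∂τ k).det := by
  simp only [det_apply', of_apply]
  rw [integral_finsetSum _ fun σ _ =>
    (Integrable.fintype_prod_dep fun k => hf (σ k) k).const_mul _]
  simp only [integral_const_mul]
  exact Finset.sum_congr rfl fun σ _ =>
    congrArg _ (integral_fintype_prod_eq_prod fun k => f (σ k) k)

section Functional

variable {Ω : Type*} [MeasurableSpace Ω] {τ : Measure Ω} {z g : Ω → 𝕜}

lemma integrable_eval_mul (hg : ∀ k : ℕ, Integrable (fun ω => z ω ^ k * g ω) τ) (p : 𝕜[X]) :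
    Integrable (fun ω => p.eval (z ω) * g ω) τ := by
  simp only [eval_eq_sum, Polynomial.sum, Finset.sum_mul, mul_assoc]
  exact integrable_finsetSum _ fun k _ => (hg k).const_mul _

lemma momentFunctional_integral (hg : ∀ k : ℕ, Integrable (fun ω => z ω ^ k * g ω) τ) (p : 𝕜[X]) :
    momentFunctional (fun k => ∫ ω, z ω ^ k * g ω ∂τ) p = ∫ ω, p.eval (z ω) * g ω ∂τ := by
  simp only [momentFunctional_apply, eval_eq_sum, Polynomial.sum, Finset.sum_mul, mul_assoc]
  rw [integral_finsetSum _ fun k _ => (hg k).const_mul _]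
  simp only [integral_const_mul]

end Functional

theorem bordered_hankel_measure_borders_eq_integral_general {m : ℕ} (s : ℕ → 𝕜) (N : ℕ)
    (hs : ∀ k, N ≤ k → k < N + m → (hankelMatrix s k).det ≠ 0)
    {Ω : Fin m → Type*} [∀ k, MeasurableSpace (Ω k)] (τ : ∀ k, Measure (Ω k))
    [∀ k, SigmaFinite (τ k)] (z g : ∀ k, Ω k → 𝕜)
    (hg : ∀ k, ∀ j : ℕ, Integrable (fun ω => z k ω ^ j * g k ω) (τ k)) :
    (borderedHankelMatrix s N fun k j => ∫ ω, z k ω ^ j * g k ω ∂τ k).det =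
      (hankelMatrix s N).det *
        ∫ ω, (of fun i k : Fin m => (monicOrthogonalPolynomial s (N + i)).eval (z k (ω k))).det *
          ∏ k, g k (ω k) ∂Measure.pi τ := by
  rw [det_borderedHankelMatrix_eq_mul_det_monicOrthogonalPolynomial s N hs]
  simp only [momentFunctional_integral (hg _)]
  rw [← integral_pi_det τ _ fun i k => integrable_eval_mul (hg k) _]
  congr! 3 with ω
  rw [mul_comm, ← det_mul_row]
  simp only [of_apply, mul_comm]

end Integration

section Measures

variable (μ : Measure ℝ)

lemma ofReal_hankelDet (n : ℕ) :
    (hankelDet μ n : ℂ) = (hankelMatrix (fun k => (mom μ k : ℂ)) n).det :=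
  Complex.ofRealHom.map_det _

lemma monicOP_eq_eval (k : ℕ) (z : ℂ) :
    monicOP μ k z = (monicOrthogonalPolynomial (fun k => (mom μ k : ℂ)) k).eval z := by
  rw [monicOP, monicOrthogonalPolynomial, ofReal_hankelDet, eval_smul, smul_eq_mul,
    ← coe_evalRingHom, RingHom.map_det]
  congr 2
  ext i j
  refine Fin.lastCases ?_ (fun i => ?_) i
  · simp
  · simp [hankelMatrix, Fin.castSucc_ne_last]

end Measures

/-- Corollary 1.3 (Hankel case): the multi-bordered Hankel determinant, with borders given by
the moments of finite complex measures `dν⁽ⁱ⁾ = gᵢ dτᵢ` having all absolute moments finite,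
equals `H_{n-m}[μ]` times the multiple integral of the determinant of orthogonal polynomials
against the border measures. -/
theorem bordered_hankel_measure_borders_eq_integral
    (μ : Measure ℝ) (hmom : ∀ k : ℕ, Integrable (fun x : ℝ => x ^ k) μ)
    (n m : ℕ) (hm : 1 ≤ m) (hmn : m ≤ n)
    (hH : ∀ k : ℕ, n - m ≤ k → k ≤ n - 1 → hankelDet μ k ≠ 0)
    (τ : Fin m → Measure ℝ) [∀ i, IsFiniteMeasure (τ i)] (g : Fin m → ℝ → ℂ)
    (hg : ∀ i, ∀ k : ℕ, Integrable (fun x : ℝ => ((x : ℂ) ^ k) * g i x) (τ i)) :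
    Matrix.det (Matrix.of fun j k : Fin n =>
      if hk : (k : ℕ) < n - m then ((mom μ ((j : ℕ) + (k : ℕ)) : ℝ) : ℂ)
      else cmom (τ ⟨(k : ℕ) - (n - m), by have := k.isLt; omega⟩)
        (g ⟨(k : ℕ) - (n - m), by have := k.isLt; omega⟩) (j : ℕ)) =
    ((hankelDet μ (n - m) : ℝ) : ℂ) *
      ∫ x : Fin m → ℝ,
        (Matrix.det (Matrix.of fun i k : Fin m => monicOP μ (n - m + (i : ℕ)) ((x k : ℝ) : ℂ)))
          * ∏ i : Fin m, g i (x i) ∂(Measure.pi τ) := by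
  obtain ⟨N, rfl⟩ := Nat.exists_eq_add_of_le' hmn
  simp only [Nat.add_sub_cancel] at hH ⊢
  have hankel_ne (k : ℕ) (hNk : N ≤ k) (hk : k < N + m) :
      (hankelMatrix (fun k => (mom μ k : ℂ)) k).det ≠ 0 := by
    rw [← ofReal_hankelDet]
    exact_mod_cast hH k hNk (by omega)
  simpa only [cmom, borderedHankelMatrix_eq_of_dite, ← monicOP_eq_eval, ← ofReal_hankelDet] using
    bordered_hankel_measure_borders_eq_integral_general _ N hankel_ne τ
      (fun _ => Complex.ofReal) g hg
end

section
/- Let μ be a positive Borel measure on ℝ with all moments finite, let 1 ≤ m < n, and assume H_k[μ] ≠ 0 for every k with 1 ≤ k ≤ n−m. Let ν^{(1)},…,ν^{(m)} and η^{(1)},…,η^{(m)} be finite complex Borel measures on ℝ with all absolute moments finite, with moments ν^{(i)}_k = ∫_ℝ x^k dν^{(i)}(x) and η^{(i)}_k = ∫_ℝ x^k dη^{(i)}(x), and let A = (a_{jk})_{j,k=1}^{m} be a complex m×m matrix. Let H_n^F[μ; ν⃗; η⃗; A] denote the determinant of the n×n matrix whose (j,k) entry equals μ_{j+k−2} for 1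 ≤ j,k ≤ n−m, equals ν^{(i)}_{j−1} when k = n−m+i and 1 ≤ j ≤ n−m, equals η^{(i)}_{k−1} when j = n−m+i and 1 ≤ k ≤ n−m, and equals a_{il} when j = n−m+i and k = n−m+l. Then H_n^F[μ; ν⃗; η⃗; A] = H_{n−m}[μ] · det( a_{jk} − ∫_ℝ∫_ℝ K_{n−m−1}(x, y) dν^{(k)}(x) dη^{(j)}(y) )_{j,k=1}^{m}. -/
open MeasureTheory Matrix Finset

/-- The norm `h_k = H_{k+1}[μ] / H_k[μ]` of the `k`-th monic orthogonal polynomial. -/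
noncomputable def opNorm (μ : Measure ℝ) (k : ℕ) : ℝ := hankelDet μ (k + 1) / hankelDet μ k

/-- The reproducing kernel `K_N(x,y) = Σ_{k=0}^{N} P_k(x) P_k(y) / h_k`. -/
noncomputable def repKer (μ : Measure ℝ) (N : ℕ) (x y : ℂ) : ℂ :=
  ∑ k ∈ Finset.range (N + 1), monicOP μ k x * monicOP μ k y / ((opNorm μ k : ℝ) : ℂ)

/-!
The framed matrix is a block matrix with the Hankel matrix `M` in its upper left corner, so its
determinant is `det M` times that of the Schur complement `A - C * M⁻¹ * B`. The coefficient
vectors of the orthogonal polynomials form a unitriangular matrix `L` with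
`L * M * Lᵀ = diagonal (h_k)`, so `M⁻¹ = Lᵀ * diagonal (h_k⁻¹) * L` is the coefficient matrix of the
reproducing kernel. Integrating the kernel therefore replaces each monomial by a moment and
gives the entries of `C * M⁻¹ * B`.
-/

section OrthogonalPolynomials

/-- The upper left `n × n` block of an infinite matrix. -/
def leadingBlock {R : Type*} (M : Matrix ℕ ℕ R) (n : ℕ) : Matrix (Fin n) (Fin n) R :=
  M.submatrix Fin.val Fin.val

variable {K : Type*} [Field K]

/-- The pairing of the `k`-th monic orthogonal polynomial of the Gram matrix `M` with a linear
functional, the latter being given by its sequence `w` of values on the monomials: the last row of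
the leading block of size `k + 1` is replaced by `w`. In particular `w j = z ^ j` gives the value
of the polynomial at `z`. -/
noncomputable def orthFunctional (M : Matrix ℕ ℕ K) (k : ℕ) : (ℕ → K) →ₗ[K] K :=
  (leadingBlock M k).det⁻¹ •
    (LinearMap.proj (Fin.last k) ∘ₗ cramer (leadingBlock M (k + 1))ᵀ ∘ₗ
      LinearMap.funLeft K K Fin.val)

/-- The matrix whose `k`-th row holds the coefficients of the `k`-th monic orthogonal polynomial
of the Gram matrix `M`. -/
noncomputable def orthCoeff (M : Matrix ℕ ℕ K) (n : ℕ) : Matrix (Fin n) (Fin n) K :=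
  of fun k j => orthFunctional M k (Pi.single (j : ℕ) 1)

/-- The squared norm of the `k`-th monic orthogonal polynomial of the Gram matrix `M`. -/
noncomputable def orthNorm (M : Matrix ℕ ℕ K) (k : ℕ) : K :=
  (leadingBlock M (k + 1)).det / (leadingBlock M k).det

variable (M : Matrix ℕ ℕ K)

lemma orthFunctional_apply (k : ℕ) (w : ℕ → K) :
    orthFunctional M k w = (leadingBlock M k).det⁻¹ *
      ((leadingBlock M (k + 1)).updateRow (Fin.last k) fun j => w j).det := by
  rw [← cramer_transpose_apply]
  rfl

lemma orthFunctional_congr {k : ℕ} {v w : ℕ → K} (h : ∀ j ≤ k, v j = w j) :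
    orthFunctional M k v = orthFunctional M k w := by
  have hvw : (fun j : Fin (k + 1) => v j) = fun j : Fin (k + 1) => w j :=
    funext fun j => h j (Nat.le_of_lt_succ j.isLt)
  rw [orthFunctional_apply, orthFunctional_apply, hvw]

lemma orthFunctional_single_of_lt {k j : ℕ} (h : k < j) :
    orthFunctional M k (Pi.single j 1) = 0 := by
  rw [orthFunctional_congr M (w := 0) fun i hi => Pi.single_eq_of_ne (hi.trans_lt h).ne 1,
    map_zero]

lemma orthFunctional_single_self {k : ℕ} (h : (leadingBlock M k).det ≠ 0) :
    orthFunctional M k (Pi.single k 1) = 1 := by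
  have hrow : (fun j : Fin (k + 1) => (Pi.single k 1 : ℕ → K) j) = Pi.single (Fin.last k) 1 := by
    ext j
    simp [Pi.single_apply, Fin.ext_iff]
  have hminor : (leadingBlock M (k + 1)).submatrix (Fin.last k).succAbove (Fin.last k).succAbove =
      leadingBlock M k := by
    ext i j
    simp [leadingBlock]
  rw [orthFunctional_apply, hrow, ← adjugate_apply, adjugate_fin_succ_eq_det_submatrix, hminor,
    Even.neg_one_pow ⟨_, rfl⟩, one_mul, inv_mul_cancel₀ h]

lemma orthFunctional_row_of_lt {i k : ℕ} (h : i < k) : orthFunctional M k (M i) = 0 := by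
  have hne : (⟨i, h.trans k.lt_succ_self⟩ : Fin (k + 1)) ≠ Fin.last k := Fin.ne_of_lt h
  rw [orthFunctional_apply]
  exact mul_eq_zero_of_right _ (det_updateRow_eq_zero (M := leadingBlock M (k + 1)) hne)

lemma orthFunctional_row_self (k : ℕ) : orthFunctional M k (M k) = orthNorm M k := by
  rw [orthFunctional_apply, orthNorm, div_eq_inv_mul]
  congr 2
  exact updateRow_eq_self (leadingBlock M (k + 1)) (Fin.last k)

lemma orthCoeff_mulVec {n : ℕ} (w : ℕ → K) (k : Fin n) :
    (orthCoeff M n *ᵥ fun j => w j) k = orthFunctional M k w := by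
  have hw : ∀ i ≤ (k : ℕ), w i = (∑ j : Fin n, w j • Pi.single (j : ℕ) (1 : K)) i := by
    intro i hi
    rw [Finset.sum_apply, Finset.sum_eq_single ⟨i, hi.trans_lt k.isLt⟩]
    · simp
    · intro j _ hj
      simp [Fin.ext_iff.not.mp hj.symm]
    · simp
  rw [orthFunctional_congr M hw, map_sum]
  simp [mulVec, dotProduct, orthCoeff, mul_comm]

variable {M}

lemma orthCoeff_mul_leadingBlock_apply (hM : M.IsSymm) {n : ℕ} (k i : Fin n) :
    (orthCoeff M n * leadingBlock M n) k i = orthFunctional M k (M i) := by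
  rw [← orthCoeff_mulVec]
  simp [mul_apply, mulVec, dotProduct, leadingBlock, hM.apply]

-- Terms with `i < k` vanish by orthogonality, those with `k < i` because the degree of the `l`-th
-- polynomial is `l ≤ k`.
lemma orthCoeff_mul_leadingBlock_mul_transpose_apply_of_le (hM : M.IsSymm) {n : ℕ} {k l : Fin n}
    (hlk : l ≤ k) :
    (orthCoeff M n * leadingBlock M n * (orthCoeff M n)ᵀ) k l =
      orthNorm M k * orthFunctional M l (Pi.single (k : ℕ) 1) := by
  rw [mul_apply, Finset.sum_eq_single k]
  · rw [orthCoeff_mul_leadingBlock_apply hM, orthFunctional_row_self, transpose_apply, orthCoeff,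
      of_apply]
  · intro i _ hik
    rcases lt_or_gt_of_ne hik with hik | hki
    · rw [orthCoeff_mul_leadingBlock_apply hM, orthFunctional_row_of_lt M hik, zero_mul]
    · exact mul_eq_zero_of_right _ (orthFunctional_single_of_lt M (hlk.trans_lt hki))
  · simp

lemma orthCoeff_mul_leadingBlock_mul_transpose (hM : M.IsSymm) {n : ℕ}
    (hdet : ∀ k < n, (leadingBlock M k).det ≠ 0) :
    orthCoeff M n * leadingBlock M n * (orthCoeff M n)ᵀ =
      diagonal fun k : Fin n => orthNorm M k := by
  have hsymm : (orthCoeff M n * leadingBlock M n * (orthCoeff M n)ᵀ).IsSymm := by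
    simp only [IsSymm, transpose_mul, transpose_transpose, (hM.submatrix _).eq, leadingBlock,
      Matrix.mul_assoc]
  ext k l
  wlog hlk : l ≤ k generalizing k l
  · rw [← hsymm.apply, this l k (le_of_not_ge hlk), (isSymm_diagonal _).apply]
  rw [orthCoeff_mul_leadingBlock_mul_transpose_apply_of_le hM hlk]
  rcases hlk.eq_or_lt with rfl | hlt
  · rw [orthFunctional_single_self M (hdet l l.isLt), mul_one, diagonal_apply_eq]
  · rw [orthFunctional_single_of_lt M hlt, mul_zero, diagonal_apply_ne _ hlt.ne']

lemma leadingBlock_inv (hM : M.IsSymm) {n : ℕ} (hdet : ∀ k ≤ n, (leadingBlock M k).det ≠ 0) :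
    (leadingBlock M n)⁻¹ =
      (orthCoeff M n)ᵀ * (diagonal fun k : Fin n => (orthNorm M k)⁻¹) * orthCoeff M n := by
  have hnorm (k : Fin n) : orthNorm M k ≠ 0 :=
    div_ne_zero (hdet (k + 1) k.isLt) (hdet k k.isLt.le)
  have hright : orthCoeff M n * (leadingBlock M n * (orthCoeff M n)ᵀ *
      diagonal fun k : Fin n => (orthNorm M k)⁻¹) = 1 := by
    rw [← Matrix.mul_assoc, ← Matrix.mul_assoc,
      orthCoeff_mul_leadingBlock_mul_transpose hM fun k hk => hdet k hk.le, diagonal_mul_diagonal]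
    simp only [mul_inv_cancel₀ (hnorm _), diagonal_one]
  refine inv_eq_right_inv ?_
  simpa only [Matrix.mul_assoc] using mul_eq_one_comm.mp hright

lemma dotProduct_leadingBlock_inv_mulVec (hM : M.IsSymm) {n : ℕ}
    (hdet : ∀ k ≤ n, (leadingBlock M k).det ≠ 0) (v w : ℕ → K) :
    (fun i : Fin n => w i) ⬝ᵥ (leadingBlock M n)⁻¹ *ᵥ (fun i => v i) =
      ∑ k ∈ Finset.range n, orthFunctional M k v * orthFunctional M k w / orthNorm M k := by
  rw [leadingBlock_inv hM hdet, ← mulVec_mulVec, ← mulVec_mulVec, dotProduct_mulVec,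
    vecMul_transpose, dotProduct, ← Fin.sum_univ_eq_sum_range fun k =>
      orthFunctional M k v * orthFunctional M k w / orthNorm M k]
  refine Finset.sum_congr rfl fun k _ => ?_
  rw [mulVec_diagonal, orthCoeff_mulVec, orthCoeff_mulVec]
  ring

end OrthogonalPolynomials

section Moments

/-- The infinite Hankel matrix of the moments of `μ`, viewed over `ℂ`. -/
noncomputable def momentMatrix (μ : Measure ℝ) : Matrix ℕ ℕ ℂ := of fun i j => (mom μ (i + j) : ℂ)

lemma momentMatrix_isSymm (μ : Measure ℝ) : (momentMatrix μ).IsSymm :=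
  IsSymm.ext fun i j => by simp only [momentMatrix, of_apply, add_comm]

lemma det_leadingBlock_momentMatrix (μ : Measure ℝ) (n : ℕ) :
    (leadingBlock (momentMatrix μ) n).det = hankelDet μ n :=
  (Complex.ofRealHom.map_det _).symm

lemma monicOP_eq_orthFunctional (μ : Measure ℝ) (k : ℕ) (z : ℂ) :
    monicOP μ k z = orthFunctional (momentMatrix μ) k (z ^ ·) := by
  rw [orthFunctional_apply, det_leadingBlock_momentMatrix, monicOP]
  congr 2
  ext i j
  by_cases hi : (i : ℕ) < k
  · rw [updateRow_ne (Fin.ne_of_lt hi)]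
    simp [hi, leadingBlock, momentMatrix]
  · obtain rfl : i = Fin.last k := Fin.ext (by rw [Fin.val_last]; omega)
    simp

lemma opNorm_eq_orthNorm (μ : Measure ℝ) (k : ℕ) :
    (opNorm μ k : ℂ) = orthNorm (momentMatrix μ) k := by
  rw [opNorm, orthNorm, det_leadingBlock_momentMatrix, det_leadingBlock_momentMatrix,
    Complex.ofReal_div]

lemma repKer_eq_dotProduct_inv_mulVec {μ : Measure ℝ} {N : ℕ}
    (hH : ∀ k ≤ N + 1, hankelDet μ k ≠ 0) (x y : ℂ) :
    repKer μ N x y = (fun i : Fin (N + 1) => y ^ (i : ℕ)) ⬝ᵥ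
      (leadingBlock (momentMatrix μ) (N + 1))⁻¹ *ᵥ fun i => x ^ (i : ℕ) := by
  have hdet (k : ℕ) (hk : k ≤ N + 1) : (leadingBlock (momentMatrix μ) k).det ≠ 0 := by
    rw [det_leadingBlock_momentMatrix]
    exact_mod_cast hH k hk
  rw [dotProduct_leadingBlock_inv_mulVec (momentMatrix_isSymm μ) hdet (x ^ ·) (y ^ ·)]
  simp only [repKer, monicOP_eq_orthFunctional, opNorm_eq_orthNorm]

lemma integral_dotProduct_pow_mul {τ : Measure ℝ} {g : ℝ → ℂ}
    (hg : ∀ k : ℕ, Integrable (fun x : ℝ => (x : ℂ) ^ k * g x) τ) {n : ℕ} (c : Fin n → ℂ) :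
    ∫ x : ℝ, (c ⬝ᵥ fun i => (x : ℂ) ^ (i : ℕ)) * g x ∂τ = c ⬝ᵥ fun i => cmom τ g i := by
  simp only [dotProduct, Finset.sum_mul, mul_assoc, cmom]
  rw [integral_finsetSum _ fun (i : Fin n) _ => (hg i).const_mul (c i)]
  simp only [integral_const_mul]

lemma integral_integral_dotProduct_mulVec_pow {τ ρ : Measure ℝ} {g p : ℝ → ℂ}
    (hg : ∀ k : ℕ, Integrable (fun x : ℝ => (x : ℂ) ^ k * g x) τ)
    (hp : ∀ k : ℕ, Integrable (fun x : ℝ => (x : ℂ) ^ k * p x) ρ)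
    {m n : ℕ} (Q : Matrix (Fin m) (Fin n) ℂ) :
    ∫ y : ℝ, (∫ x : ℝ, ((fun i : Fin m => (y : ℂ) ^ (i : ℕ)) ⬝ᵥ
        Q *ᵥ fun i => (x : ℂ) ^ (i : ℕ)) * g x ∂τ) * p y ∂ρ =
      (fun i : Fin m => cmom ρ p i) ⬝ᵥ Q *ᵥ fun i => cmom τ g i := by
  simp only [dotProduct_mulVec _ Q, integral_dotProduct_pow_mul hg]
  simp only [← dotProduct_mulVec _ Q, dotProduct_comm _ (Q *ᵥ _), integral_dotProduct_pow_mul hp]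

lemma integral_integral_repKer {μ τ ρ : Measure ℝ} {g p : ℝ → ℂ} {N : ℕ}
    (hH : ∀ k ≤ N + 1, hankelDet μ k ≠ 0)
    (hg : ∀ k : ℕ, Integrable (fun x : ℝ => (x : ℂ) ^ k * g x) τ)
    (hp : ∀ k : ℕ, Integrable (fun x : ℝ => (x : ℂ) ^ k * p x) ρ) :
    ∫ y : ℝ, (∫ x : ℝ, repKer μ N x y * g x ∂τ) * p y ∂ρ =
      (fun i : Fin (N + 1) => cmom ρ p i) ⬝ᵥ
        (leadingBlock (momentMatrix μ) (N + 1))⁻¹ *ᵥ fun i => cmom τ g i := by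
  simp only [repKer_eq_dotProduct_inv_mulVec hH, integral_integral_dotProduct_mulVec_pow hg hp]

end Moments

section FramedDeterminant

lemma det_of_dite_eq_det_fromBlocks {R : Type*} [CommRing R] {N m n : ℕ} (hn : N + m = n)
    (P : Matrix (Fin N) (Fin N) R) (B : Matrix (Fin N) (Fin m) R)
    (C : Matrix (Fin m) (Fin N) R) (A : Matrix (Fin m) (Fin m) R) :
    (of fun j k : Fin n =>
      if hj : (j : ℕ) < N then
        if hk : (k : ℕ) < N then P ⟨j, hj⟩ ⟨k, hk⟩ else B ⟨j, hj⟩ ⟨k - N, by omega⟩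
      else
        if hk : (k : ℕ) < N then C ⟨j - N, by omega⟩ ⟨k, hk⟩
        else A ⟨j - N, by omega⟩ ⟨k - N, by omega⟩).det = (fromBlocks P B C A).det := by
  subst hn
  rw [← det_submatrix_equiv_self finSumFinEquiv]
  congr 1
  ext (i | i) (j | j) <;> simp

theorem framed_hankel_measure_borders_eq_repKer_det_general
    {ι : Type*} [Fintype ι] [DecidableEq ι]
    (μ : Measure ℝ) (_hmom : ∀ k : ℕ, Integrable (fun x : ℝ => x ^ k) μ)
    {N : ℕ} (hN : 1 ≤ N) (hH : ∀ k : ℕ, 1 ≤ k → k ≤ N → hankelDet μ k ≠ 0)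
    (τ : ι → Measure ℝ) (g : ι → ℝ → ℂ)
    (hg : ∀ i, ∀ k : ℕ, Integrable (fun x : ℝ => (x : ℂ) ^ k * g i x) (τ i))
    (ρ : ι → Measure ℝ) (p : ι → ℝ → ℂ)
    (hp : ∀ i, ∀ k : ℕ, Integrable (fun x : ℝ => (x : ℂ) ^ k * p i x) (ρ i))
    (A : Matrix ι ι ℂ) :
    (fromBlocks (leadingBlock (momentMatrix μ) N) (of fun i k => cmom (τ k) (g k) i)
        (of fun j i => cmom (ρ j) (p j) i) A).det =
      hankelDet μ N * (of fun j k =>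
        A j k - ∫ y : ℝ, (∫ x : ℝ, repKer μ (N - 1) x y * g k x ∂τ k) * p j y ∂ρ j).det := by
  obtain ⟨N, rfl⟩ := Nat.exists_eq_add_of_le' hN
  have hH' (k : ℕ) (hk : k ≤ N + 1) : hankelDet μ k ≠ 0 := by
    rcases k.eq_zero_or_pos with rfl | hpos
    · simp [hankelDet]
    · exact hH k hpos hk
  have hunit : IsUnit (leadingBlock (momentMatrix μ) (N + 1)).det := by
    rw [det_leadingBlock_momentMatrix]
    exact isUnit_iff_ne_zero.mpr (by exact_mod_cast hH' (N + 1) le_rfl)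
  let := invertibleOfIsUnitDet _ hunit
  rw [det_fromBlocks₁₁, invOf_eq_nonsing_inv, det_leadingBlock_momentMatrix]
  congr 2
  ext j k
  rw [of_apply, Nat.add_sub_cancel, integral_integral_repKer hH' (hg k) (hp j),
    Matrix.sub_apply, Matrix.mul_assoc]
  rfl

end FramedDeterminant

/-- Corollary 1.5: the framed Hankel determinant with borders given by the moments of finite
complex measures `dν⁽ⁱ⁾ = gᵢ dτᵢ` and `dη⁽ⁱ⁾ = pᵢ dρᵢ` (all with finite absolute moments)
equals `H_{n-m}[μ] · det( a_{jk} - ∫∫ K_{n-m-1}(x,y) dν⁽ᵏ⁾(x) dη⁽ʲ⁾(y) )`. -/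
theorem framed_hankel_measure_borders_eq_repKer_det
    (μ : Measure ℝ) (hmom : ∀ k : ℕ, Integrable (fun x : ℝ => x ^ k) μ)
    (n m : ℕ) (hm : 1 ≤ m) (hmn : m < n)
    (hH : ∀ k : ℕ, 1 ≤ k → k ≤ n - m → hankelDet μ k ≠ 0)
    (τ : Fin m → Measure ℝ) [∀ i, IsFiniteMeasure (τ i)] (g : Fin m → ℝ → ℂ)
    (hg : ∀ i, ∀ k : ℕ, Integrable (fun x : ℝ => ((x : ℂ) ^ k) * g i x) (τ i))
    (ρ : Fin m → Measure ℝ) [∀ i, IsFiniteMeasure (ρ i)] (p : Fin m → ℝ → ℂ)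
    (hp : ∀ i, ∀ k : ℕ, Integrable (fun x : ℝ => ((x : ℂ) ^ k) * p i x) (ρ i))
    (A : Matrix (Fin m) (Fin m) ℂ) :
    Matrix.det (Matrix.of fun j k : Fin n =>
      if hj : (j : ℕ) < n - m then
        (if hk : (k : ℕ) < n - m then ((mom μ ((j : ℕ) + (k : ℕ)) : ℝ) : ℂ)
         else cmom (τ ⟨(k : ℕ) - (n - m), by have := k.isLt; omega⟩)
                (g ⟨(k : ℕ) - (n - m), by have := k.isLt; omega⟩) (j : ℕ))
      else
        (if hk : (k : ℕ) < n - m then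
           cmom (ρ ⟨(j : ℕ) - (n - m), by have := j.isLt; omega⟩)
             (p ⟨(j : ℕ) - (n - m), by have := j.isLt; omega⟩) (k : ℕ)
         else A ⟨(j : ℕ) - (n - m), by have := j.isLt; omega⟩
                ⟨(k : ℕ) - (n - m), by have := k.isLt; omega⟩)) =
    ((hankelDet μ (n - m) : ℝ) : ℂ) *
      Matrix.det (Matrix.of fun j k : Fin m =>
        A j k - ∫ y, (∫ x, repKer μ (n - m - 1) ((x : ℝ) : ℂ) ((y : ℝ) : ℂ) * g k x ∂(τ k))
          * p j y ∂(ρ j)) := by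
  exact (det_of_dite_eq_det_fromBlocks (Nat.sub_add_cancel hmn.le) _ _ _ A).trans
    (framed_hankel_measure_borders_eq_repKer_det_general μ hmom (by omega) hH τ g hg ρ p hp A)
end
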